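/- arXiv:2103.01433 — 2 statements merged into one kernel-verified Lean document; each statement's English description precedes it below -/
import Mathlib

section
/- Let K ≥ 1 and let Ḡ_k, Ē_k, F̄_k > 0 for k = 1,…,K. Define R̄(τ) := (1 − τ) Σ_{k=1}^K ln(1 + Ḡ_kτ/(Ē_kτ + F̄_k)) for τ ∈ [0,1]. Then R̄(0) = R̄(1) = 0, R̄′(0⁺) > 0, R̄′(1⁻) < 0, and there is a unique τ* ∈ (0,1) satisfying R̄′(τ*) = Σ_{k=1}^K ( Ḡ_kF̄_k(1−τ*)/((Ē_kτ* + F̄_k)((Ḡ_k + Ē_k)τ* + F̄_k)) − ln(1 + Ḡ_kτ*/(Ē_kτ* + F̄_k)) ) = 0; this τ* is the unique maximizer of R̄ over (0,1). -/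
open Real Set

/-- The derivative of `(1 - τ) * log (1 + g * τ / (e * τ + f))`. -/
noncomputable def rateSlope (g e f τ : ℝ) : ℝ :=
  g * f * (1 - τ) / ((e * τ + f) * ((g + e) * τ + f)) - Real.log (1 + g * τ / (e * τ + f))

lemma hasDerivAt_rate {g e f τ : ℝ} (hg : 0 < g) (he : 0 < e) (hf : 0 < f) (hτ : 0 ≤ τ) :
    HasDerivAt (fun t => (1 - t) * Real.log (1 + g * t / (e * t + f))) (rateSlope g e f τ) τ := by
  have h1 : 0 < e * τ + f := by positivity
  have h2 : 0 < (g + e) * τ + f := by positivity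
  have h3 : 0 < 1 + g * τ / (e * τ + f) := by positivity
  have hn : HasDerivAt (fun t => g * t) g τ := by
    simpa using (hasDerivAt_id τ).const_mul g
  have hd : HasDerivAt (fun t => e * t + f) e τ := by
    simpa using ((hasDerivAt_id τ).const_mul e).add_const f
  have hl := ((hn.fun_div hd h1.ne').const_add 1).log h3.ne'
  refine (((hasDerivAt_id' τ).const_sub 1).mul hl).congr_deriv ?_
  have h4 : 1 + g * τ / (e * τ + f) = ((g + e) * τ + f) / (e * τ + f) := by
    field_simp
    ring
  unfold rateSlope
  rw [h4]
  field_simp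
  ring

lemma strictAntiOn_rateSlope {g e f : ℝ} (hg : 0 < g) (he : 0 < e) (hf : 0 < f) :
    StrictAntiOn (rateSlope g e f) (Icc 0 1) := by
  intro x hx y hy hxy
  have hx0 := hx.1
  have hy0 := hy.1
  have hy1 : 0 ≤ 1 - y := sub_nonneg.2 hy.2
  have hfrac : g * f * (1 - y) / ((e * y + f) * ((g + e) * y + f)) ≤
      g * f * (1 - x) / ((e * x + f) * ((g + e) * x + f)) := by
    gcongr
    have := hx.2
    have : 0 ≤ 1 - x := by linarith
    positivity
  have hlog : Real.log (1 + g * x / (e * x + f)) < Real.log (1 + g * y / (e * y + f)) := by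
    apply Real.log_lt_log (by positivity)
    rw [add_lt_add_iff_left, div_lt_div_iff₀ (by positivity) (by positivity)]
    nlinarith [mul_pos (mul_pos hg hf) (sub_pos.2 hxy)]
  unfold rateSlope
  linarith

lemma continuousOn_rateSlope {g e f : ℝ} (hg : 0 < g) (he : 0 < e) (hf : 0 < f) :
    ContinuousOn (rateSlope g e f) (Icc 0 1) := by
  intro x hx
  have hx0 := hx.1
  have h1 : e * x + f ≠ 0 := by positivity
  have h2 : (e * x + f) * ((g + e) * x + f) ≠ 0 := by positivity
  have h3 : 1 + g * x / (e * x + f) ≠ 0 := by positivity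
  unfold rateSlope
  apply ContinuousAt.continuousWithinAt
  fun_prop (disch := assumption)

lemma rateSlope_zero_pos {g e f : ℝ} (hg : 0 < g) (hf : 0 < f) : 0 < rateSlope g e f 0 := by
  simp only [rateSlope, mul_zero, zero_add, zero_div, add_zero, Real.log_one, sub_zero]
  positivity

lemma rateSlope_one_neg {g e f : ℝ} (hg : 0 < g) (he : 0 < e) (hf : 0 < f) :
    rateSlope g e f 1 < 0 := by
  have : 0 < Real.log (1 + g * 1 / (e * 1 + f)) := by
    apply Real.log_pos
    have : 0 < g * 1 / (e * 1 + f) := by positivity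
    linarith
  simpa [rateSlope] using this

/-- A function on `[0, 1]` whose derivative is continuous, strictly decreasing and changes sign
has a unique critical point, which is its unique strict maximizer. -/
lemma exists_unique_critical_point {R D : ℝ → ℝ}
    (hder : ∀ t ∈ Icc (0 : ℝ) 1, HasDerivAt R (D t) t)
    (hcont : ContinuousOn D (Icc 0 1)) (hanti : StrictAntiOn D (Icc 0 1))
    (h0 : 0 < D 0) (h1 : D 1 < 0) :
    ∃ s ∈ Ioo (0 : ℝ) 1, D s = 0 ∧ (∀ t ∈ Ioo (0 : ℝ) 1, D t = 0 → t = s) ∧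
      ∀ t ∈ Ioo (0 : ℝ) 1, t ≠ s → R t < R s := by
  obtain ⟨s, hs, hs0⟩ := intermediate_value_Ioo' zero_le_one hcont ⟨h1, h0⟩
  have hsI := Ioo_subset_Icc_self hs
  have hRc : ContinuousOn R (Icc 0 1) := fun t ht => (hder t ht).continuousAt.continuousWithinAt
  refine ⟨s, hs, hs0, fun t ht h => hanti.injOn (Ioo_subset_Icc_self ht) hsI (h.trans hs0.symm),
    fun t ht hne => ?_⟩
  rcases hne.lt_or_gt with hlt | hgt
  · have hmono : StrictMonoOn R (Icc 0 s) := by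
      refine strictMonoOn_of_deriv_pos (convex_Icc 0 s)
        (hRc.mono (Icc_subset_Icc_right hsI.2)) fun u hu => ?_
      rw [interior_Icc] at hu
      have huI : u ∈ Icc (0 : ℝ) 1 := ⟨hu.1.le, hu.2.le.trans hsI.2⟩
      rw [(hder u huI).deriv, ← hs0]
      exact hanti huI hsI hu.2
    exact hmono ⟨ht.1.le, hlt.le⟩ (right_mem_Icc.2 hsI.1) hlt
  · have hanti' : StrictAntiOn R (Icc s 1) := by
      refine strictAntiOn_of_deriv_neg (convex_Icc s 1)
        (hRc.mono (Icc_subset_Icc_left hsI.1)) fun u hu => ?_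
      rw [interior_Icc] at hu
      have huI : u ∈ Icc (0 : ℝ) 1 := ⟨hsI.1.trans hu.1.le, hu.2.le⟩
      rw [(hder u huI).deriv, ← hs0]
      exact hanti hsI huI hu.1
    exact hanti' (left_mem_Icc.2 hsI.2) ⟨hgt.le, ht.2.le⟩ hgt

theorem stmt_14 (K : ℕ) (hK : 1 ≤ K) (G E F : Fin K → ℝ)
    (hG : ∀ k, 0 < G k) (hE : ∀ k, 0 < E k) (hF : ∀ k, 0 < F k)
    (R : ℝ → ℝ)
    (hR : ∀ τ : ℝ,
      R τ = (1 - τ) * ∑ k, Real.log (1 + G k * τ / (E k * τ + F k))) :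
    R 0 = 0 ∧ R 1 = 0 ∧ 0 < deriv R 0 ∧ deriv R 1 < 0 ∧
    ∃ τs ∈ Set.Ioo (0 : ℝ) 1,
      deriv R τs =
        (∑ k, (G k * F k * (1 - τs) /
            ((E k * τs + F k) * ((G k + E k) * τs + F k)) -
          Real.log (1 + G k * τs / (E k * τs + F k)))) ∧
      (∑ k, (G k * F k * (1 - τs) /
          ((E k * τs + F k) * ((G k + E k) * τs + F k)) -
        Real.log (1 + G k * τs / (E k * τs + F k)))) = 0 ∧
      (∀ τ ∈ Set.Ioo (0 : ℝ) 1,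
        (∑ k, (G k * F k * (1 - τ) /
            ((E k * τ + F k) * ((G k + E k) * τ + F k)) -
          Real.log (1 + G k * τ / (E k * τ + F k)))) = 0 → τ = τs) ∧
      (∀ τ ∈ Set.Ioo (0 : ℝ) 1, τ ≠ τs → R τ < R τs) := by
  have hne : (Finset.univ : Finset (Fin K)).Nonempty := ⟨⟨0, hK⟩, Finset.mem_univ _⟩
  have hder : ∀ t ∈ Icc (0 : ℝ) 1,
      HasDerivAt R (∑ k, rateSlope (G k) (E k) (F k) t) t := by
    intro t ht
    have hRsum : R = fun τ => ∑ k, (1 - τ) * Real.log (1 + G k * τ / (E k * τ + F k)) := by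
      funext τ
      rw [hR, Finset.mul_sum]
    rw [hRsum]
    exact HasDerivAt.fun_sum fun k _ => hasDerivAt_rate (hG k) (hE k) (hF k) ht.1
  have hcont : ContinuousOn (fun t => ∑ k, rateSlope (G k) (E k) (F k) t) (Icc 0 1) :=
    continuousOn_finsetSum _ fun k _ => continuousOn_rateSlope (hG k) (hE k) (hF k)
  have hanti : StrictAntiOn (fun t => ∑ k, rateSlope (G k) (E k) (F k) t) (Icc 0 1) :=
    fun x hx y hy hxy => Finset.sum_lt_sum_of_nonempty hne fun k _ =>
      strictAntiOn_rateSlope (hG k) (hE k) (hF k) hx hy hxy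
  have h0 : 0 < ∑ k, rateSlope (G k) (E k) (F k) 0 :=
    Finset.sum_pos (fun k _ => rateSlope_zero_pos (hG k) (hF k)) hne
  have h1 : ∑ k, rateSlope (G k) (E k) (F k) 1 < 0 :=
    Finset.sum_neg (fun k _ => rateSlope_one_neg (hG k) (hE k) (hF k)) hne
  obtain ⟨s, hs, hs0, huniq, hmax⟩ := exists_unique_critical_point hder hcont hanti h0 h1
  refine ⟨by simp [hR], by simp [hR], ?_, ?_, s, hs, (hder s (Ioo_subset_Icc_self hs)).deriv,
    hs0, huniq, hmax⟩
  · rwa [(hder 0 (left_mem_Icc.2 zero_le_one)).deriv]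
  · rwa [(hder 1 (right_mem_Icc.2 zero_le_one)).deriv]
end

section
/- Let q̂ > 0 and σ² > 0, and for integers n ≥ 2 define g_n(x) := ∫_{σ²}^∞ (n^n x^{n−1}/((n−1)! v^n)) e^{−nx/v} · (1/q̂) e^{−(v−σ²)/q̂} dv for x > 0. Then: (i) for every x with 0 < x < σ², lim_{n→∞} g_n(x) = 0; and (ii) for every x > σ², lim_{n→∞} g_n(x) = (1/q̂) e^{−(x−σ²)/q̂}. That is, g_n converges pointwise to the density f_V(x) = (1/q̂)e^{−(x−σ²)/q̂}·𝟙{x ≥ σ²} at every x ≠ σ². -/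
open MeasureTheory Real Set Filter

theorem integral_pow_mul_exp_neg_mul_Ioi (k : ℕ) {r : ℝ} (hr : 0 < r) :
    ∫ t in Ioi (0 : ℝ), t ^ k * exp (-(r * t)) = (Nat.factorial k : ℝ) / r ^ (k + 1) := by
  have h := Real.integral_rpow_mul_exp_neg_mul_Ioi (a := (k : ℝ) + 1) (by positivity) hr
  rw [Real.Gamma_nat_eq_factorial] at h
  simp only [add_sub_cancel_right, rpow_natCast] at h
  rw [h, ← Nat.cast_succ, rpow_natCast, one_div, inv_pow, Nat.succ_eq_add_one]
  field_simp

theorem integrableOn_pow_mul_exp_neg_mul_Ioi (k : ℕ) {r : ℝ} (hr : 0 < r) :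
    IntegrableOn (fun t : ℝ => t ^ k * exp (-(r * t))) (Ioi 0) := by
  refine .of_integral_ne_zero ?_
  rw [integral_pow_mul_exp_neg_mul_Ioi k hr]
  positivity

/-- Up to the factor `(m + 2) / (m + 1)`, the density of the Gamma distribution with shape `m + 1`
and rate `(m + 2) * x`. It concentrates at `x⁻¹` as `m → ∞`. -/
noncomputable def gammaKernel (x : ℝ) (m : ℕ) (w : ℝ) : ℝ :=
  ((m : ℝ) + 2) ^ (m + 2) * x ^ (m + 1) / (Nat.factorial (m + 1) : ℝ) *
    (w ^ m * exp (-((m + 2) * x * w)))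

theorem gammaKernel_mul_sq_eq (x : ℝ) (m : ℕ) (w : ℝ) :
    gammaKernel x m w * (x * w - 1) ^ 2 =
      ((m : ℝ) + 2) ^ (m + 2) * x ^ (m + 1) / (Nat.factorial (m + 1) : ℝ) *
        (x ^ 2 * (w ^ (m + 2) * exp (-((m + 2) * x * w)))
          - 2 * x * (w ^ (m + 1) * exp (-((m + 2) * x * w)))
          + w ^ m * exp (-((m + 2) * x * w))) := by
  unfold gammaKernel
  ring

theorem gammaKernel_nonneg {x : ℝ} (hx : 0 < x) (m : ℕ) {w : ℝ} (hw : 0 ≤ w) :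
    0 ≤ gammaKernel x m w := by
  unfold gammaKernel
  positivity

theorem integrableOn_gammaKernel {x : ℝ} (hx : 0 < x) (m : ℕ) :
    IntegrableOn (gammaKernel x m) (Ioi 0) :=
  (integrableOn_pow_mul_exp_neg_mul_Ioi m (r := (m + 2) * x) (by positivity)).const_mul _

theorem integral_gammaKernel {x : ℝ} (hx : 0 < x) (m : ℕ) :
    ∫ w in Ioi 0, gammaKernel x m w = 1 + 1 / ((m : ℝ) + 1) := by
  simp only [gammaKernel]
  rw [integral_const_mul, integral_pow_mul_exp_neg_mul_Ioi m (by positivity),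
    Nat.factorial_succ, mul_pow]
  have := Nat.factorial_ne_zero m
  push_cast
  field_simp
  ring

theorem integrableOn_gammaKernel_mul_sq {x : ℝ} (hx : 0 < x) (m : ℕ) :
    IntegrableOn (fun w => gammaKernel x m w * (x * w - 1) ^ 2) (Ioi 0) := by
  have hr : 0 < ((m : ℝ) + 2) * x := by positivity
  have hI := fun k => integrableOn_pow_mul_exp_neg_mul_Ioi k hr
  simp only [gammaKernel_mul_sq_eq x m]
  exact ((((hI (m + 2)).const_mul _).sub ((hI (m + 1)).const_mul _)).add (hI m)).const_mul _

theorem integral_gammaKernel_mul_sq {x : ℝ} (hx : 0 < x) (m : ℕ) :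
    ∫ w in Ioi 0, gammaKernel x m w * (x * w - 1) ^ 2 = 1 / ((m : ℝ) + 1) := by
  have hr : 0 < ((m : ℝ) + 2) * x := by positivity
  have hI := fun k => integrableOn_pow_mul_exp_neg_mul_Ioi k hr
  simp only [gammaKernel_mul_sq_eq x m]
  have hadd := integral_add (((hI (m + 2)).const_mul (x ^ 2)).sub ((hI (m + 1)).const_mul (2 * x)))
    (hI m)
  simp only [Pi.sub_apply] at hadd
  rw [integral_const_mul, hadd,
    integral_sub ((hI (m + 2)).const_mul _) ((hI (m + 1)).const_mul _),
    integral_const_mul, integral_const_mul]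
  simp only [integral_pow_mul_exp_neg_mul_Ioi _ hr, Nat.factorial_succ, mul_pow]
  have := Nat.factorial_ne_zero m
  push_cast
  field_simp
  ring

theorem tendsto_integral_gammaKernel_mul {x : ℝ} (hx : 0 < x) {h : ℝ → ℝ} (hm : Measurable h)
    {M : ℝ} (hM : ∀ w, |h w| ≤ M) (hc : ContinuousAt h x⁻¹) :
    Tendsto (fun m : ℕ => ∫ w in Ioi 0, gammaKernel x m w * h w) atTop (nhds (h x⁻¹)) := by
  have hM0 : 0 ≤ M := (abs_nonneg _).trans (hM 0)
  have hdiffInt (m : ℕ) : IntegrableOn (fun w => gammaKernel x m w * (h w - h x⁻¹)) (Ioi 0) := by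
    refine (integrableOn_gammaKernel hx m).mul_bdd (c := 2 * M)
      (hm.sub_const _).aestronglyMeasurable (ae_of_all _ fun w => ?_)
    calc ‖h w - h x⁻¹‖ ≤ |h w| + |h x⁻¹| := abs_sub _ _
      _ ≤ 2 * M := by linarith [hM w, hM x⁻¹]
  have hmass : Tendsto (fun m : ℕ => ∫ w in Ioi 0, gammaKernel x m w) atTop (nhds 1) := by
    simp only [integral_gammaKernel hx]
    simpa using tendsto_const_nhds.add (tendsto_one_div_add_atTop_nhds_zero_nat (𝕜 := ℝ))
  have hdiff : Tendsto (fun m : ℕ => ∫ w in Ioi 0, gammaKernel x m w * (h w - h x⁻¹))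
      atTop (nhds 0) := by
    rw [Metric.tendsto_atTop']
    intro ε hε
    obtain ⟨δ, hδ, hδh⟩ := Metric.continuousAt_iff.1 hc (ε / 2) (by positivity)
    set C : ℝ := 2 * M / (x * δ) ^ 2 with hC
    have hC0 : 0 ≤ C := by positivity
    have hpt (w : ℝ) : |h w - h x⁻¹| ≤ ε / 2 + C * (x * w - 1) ^ 2 := by
      rcases lt_or_ge (dist w x⁻¹) δ with hw | hw
      · have := (hδh hw).le
        rw [Real.dist_eq] at this
        nlinarith [mul_nonneg hC0 (sq_nonneg (x * w - 1))]
      · rw [Real.dist_eq] at hw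
        have h1 : x * δ ≤ |x * w - 1| := by
          have : x * w - 1 = x * (w - x⁻¹) := by field_simp
          rw [this, abs_mul, abs_of_pos hx]
          gcongr
        have h2 : (x * δ) ^ 2 ≤ (x * w - 1) ^ 2 := by
          rw [← sq_abs (x * w - 1)]
          gcongr
        have h3 : 2 * M ≤ C * (x * w - 1) ^ 2 := by
          calc 2 * M = C * (x * δ) ^ 2 := by rw [hC]; field_simp
            _ ≤ _ := by gcongr
        have h4 : |h w - h x⁻¹| ≤ |h w| + |h x⁻¹| := abs_sub _ _
        linarith [hM w, hM x⁻¹]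
    have hbound (m : ℕ) : |∫ w in Ioi 0, gammaKernel x m w * (h w - h x⁻¹)| ≤
        ε / 2 + (ε / 2 + C) * (1 / ((m : ℝ) + 1)) := by
      have hI1 := (integrableOn_gammaKernel hx m).const_mul (ε / 2)
      have hI2 := (integrableOn_gammaKernel_mul_sq hx m).const_mul C
      calc |∫ w in Ioi 0, gammaKernel x m w * (h w - h x⁻¹)|
          ≤ ∫ w in Ioi 0, |gammaKernel x m w * (h w - h x⁻¹)| := abs_integral_le_integral_abs
        _ ≤ ∫ w in Ioi 0, (ε / 2 * gammaKernel x m w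
              + C * (gammaKernel x m w * (x * w - 1) ^ 2)) := by
            refine setIntegral_mono_on (hdiffInt m).abs (hI1.add hI2) measurableSet_Ioi fun w hw => ?_
            have hK := gammaKernel_nonneg hx m (le_of_lt hw)
            rw [abs_mul, abs_of_nonneg hK]
            linarith [mul_le_mul_of_nonneg_left (hpt w) hK]
        _ = _ := by
            rw [integral_add hI1 hI2, integral_const_mul, integral_const_mul,
              integral_gammaKernel hx, integral_gammaKernel_mul_sq hx]
            ring
    have hlim : Tendsto (fun m : ℕ => ε / 2 + (ε / 2 + C) * (1 / ((m : ℝ) + 1))) atTop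
        (nhds (ε / 2)) := by
      simpa using tendsto_const_nhds.add
        ((tendsto_one_div_add_atTop_nhds_zero_nat (𝕜 := ℝ)).const_mul (ε / 2 + C))
    obtain ⟨N, hN⟩ := eventually_atTop.1 (hlim.eventually_lt_const (half_lt_self hε))
    refine ⟨N, fun m hm => ?_⟩
    rw [Real.dist_eq, sub_zero]
    exact (hbound m).trans_lt (hN m hm.le)
  have hsum := hdiff.add (hmass.mul_const (h x⁻¹))
  rw [zero_add, one_mul] at hsum
  refine hsum.congr fun m => ?_
  rw [← integral_mul_const,
    ← integral_add (hdiffInt m) ((integrableOn_gammaKernel hx m).mul_const _)]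
  congr with w
  ring

/-- The substitution `v = w⁻¹` turns a mixture of Gamma densities over the scale into an integral
against `gammaKernel`. -/
theorem setIntegral_Ici_gamma_mixture_eq {a x : ℝ} (ha : 0 < a) (f : ℝ → ℝ) (m : ℕ) :
    ∫ v in Ici a, ((m + 2 : ℕ) : ℝ) ^ (m + 2) * x ^ (m + 2 - 1) /
        ((Nat.factorial (m + 2 - 1) : ℝ) * v ^ (m + 2)) *
          exp (-(((m + 2 : ℕ) : ℝ) * x) / v) * f v =
      ∫ w in Ioi 0, gammaKernel x m w * (Ici a).indicator f w⁻¹ := by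
  have hsub : Ioi (0 : ℝ) ∩ Ici a = Ici a :=
    inter_eq_right.2 fun v hv => lt_of_lt_of_le ha hv
  rw [← hsub, ← setIntegral_indicator measurableSet_Ici,
    ← integral_comp_rpow_Ioi _ (p := -1) (by norm_num), hsub]
  refine setIntegral_congr_fun measurableSet_Ioi fun w hw => ?_
  have hw0 : 0 < w := hw
  have hp : w ^ (-1 - 1 : ℝ) = (w ^ 2)⁻¹ := by
    rw [show (-1 - 1 : ℝ) = -(2 : ℕ) by norm_num, rpow_neg hw0.le, rpow_natCast]
  simp only [rpow_neg_one, hp, abs_neg, abs_one, one_mul, smul_eq_mul]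
  by_cases hwa : w⁻¹ ∈ Ici a
  · simp only [indicator_of_mem hwa, gammaKernel]
    have he : -(((m + 2 : ℕ) : ℝ) * x) / w⁻¹ = -(((m : ℝ) + 2) * x * w) := by
      push_cast
      field_simp
    rw [he]
    push_cast
    generalize f w⁻¹ = y
    rw [inv_pow]
    field_simp
    ring
  · simp [indicator_of_notMem hwa]

theorem tendsto_setIntegral_Ici_gamma_mixture {a x : ℝ} (ha : 0 < a) (hx : 0 < x) {f : ℝ → ℝ}
    (hf : Measurable f) {M : ℝ} (hM : ∀ v ∈ Ici a, |f v| ≤ M)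
    (hc : ContinuousAt ((Ici a).indicator f) x) :
    Tendsto (fun n : ℕ => ∫ v in Ici a, (n : ℝ) ^ n * x ^ (n - 1) /
        ((Nat.factorial (n - 1) : ℝ) * v ^ n) * exp (-(n * x) / v) * f v)
      atTop (nhds ((Ici a).indicator f x)) := by
  rw [← tendsto_add_atTop_iff_nat 2]
  simp only [setIntegral_Ici_gamma_mixture_eq ha]
  have hM0 : 0 ≤ M := (abs_nonneg _).trans (hM a self_mem_Ici)
  have hlim := tendsto_integral_gammaKernel_mul hx (h := fun w => (Ici a).indicator f w⁻¹) (M := M)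
    ((hf.indicator measurableSet_Ici).comp measurable_inv)
    (fun w => by
      by_cases hw : w⁻¹ ∈ Ici a
      · simpa only [indicator_of_mem hw] using hM _ hw
      · simpa only [indicator_of_notMem hw, abs_zero] using hM0)
    (ContinuousAt.comp (g := (Ici a).indicator f) (by rwa [inv_inv])
      (continuousAt_inv₀ (inv_ne_zero hx.ne')))
  simpa only [inv_inv] using hlim

theorem stmt_15 (qh σ2 : ℝ) (hqh : 0 < qh) (hσ : 0 < σ2)
    (g : ℕ → ℝ → ℝ)
    (hg : ∀ n : ℕ, 2 ≤ n → ∀ x : ℝ, 0 < x →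
      g n x = ∫ v in Set.Ici σ2,
        (n : ℝ) ^ n * x ^ (n - 1) / ((Nat.factorial (n - 1) : ℝ) * v ^ n) *
          Real.exp (-(n * x) / v) * ((1 / qh) * Real.exp (-(v - σ2) / qh))) :
    (∀ x : ℝ, 0 < x → x < σ2 →
      Tendsto (fun n : ℕ => g n x) atTop (nhds 0)) ∧
    (∀ x : ℝ, σ2 < x →
      Tendsto (fun n : ℕ => g n x) atTop
        (nhds ((1 / qh) * Real.exp (-(x - σ2) / qh)))) := by
  set f : ℝ → ℝ := fun v => (1 / qh) * Real.exp (-(v - σ2) / qh) with hf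
  have hfc : Continuous f := by fun_prop
  have hM (v : ℝ) (hv : v ∈ Ici σ2) : |f v| ≤ 1 / qh := by
    have hle : exp (-(v - σ2) / qh) ≤ 1 :=
      exp_le_one_iff.2 (div_nonpos_of_nonpos_of_nonneg (by linarith [mem_Ici.1 hv]) hqh.le)
    rw [abs_of_nonneg (by positivity)]
    exact mul_le_of_le_one_right (by positivity) hle
  have key (x : ℝ) (hx : 0 < x) (hc : ContinuousAt ((Ici σ2).indicator f) x) :
      Tendsto (fun n : ℕ => g n x) atTop (nhds ((Ici σ2).indicator f x)) := by
    refine (tendsto_setIntegral_Ici_gamma_mixture hσ hx hfc.measurable hM hc).congr' ?_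
    filter_upwards [eventually_ge_atTop 2] with n hn
    exact (hg n hn x hx).symm
  refine ⟨fun x hx hxσ => ?_, fun x hxσ => ?_⟩
  · have hev : (Ici σ2).indicator f =ᶠ[nhds x] fun _ => 0 := by
      filter_upwards [Iio_mem_nhds hxσ] with v hv
      exact indicator_of_notMem (notMem_Ici.2 hv) f
    simpa only [hev.eq_of_nhds] using key x hx (continuousAt_const.congr hev.symm)
  · have hev : (Ici σ2).indicator f =ᶠ[nhds x] f := by
      filter_upwards [Ioi_mem_nhds hxσ] with v hv
      exact indicator_of_mem (le_of_lt hv) f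
    simpa only [hev.eq_of_nhds] using key x (hσ.trans hxσ) (hfc.continuousAt.congr hev.symm)
end
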